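/- There exists an absolute constant c > 0 with the following property (sample complexity for generalization). In the setting of the fixed-architecture unitary circuit model — F : U(4)^T → U(4m) given by F(U_1,…,U_T) = V_T (U_T ⊗ I_m) ⋯ V_1 (U_1 ⊗ I_m) V_0 for fixed V_0,…,V_T ∈ U(4m); a probability measure μ on a measurable space Z; measurable ρ : Z → density matrices in ℂ^{4m×4m}; measurable O : Z → Hermitian matrices in ℂ^{4m×4m} with ‖O_z‖ ≤ C; loss ℓ(θ; z) = Re Tr(O_z · F(θ) · ρ(z) · F(θ)*); risks R(θ) = ∫ ℓ(θ;·) dμ and R̂_S(θ) = (1/N) Σ_{i=1}^N ℓ(θ; z_i) — the following holds: for every ε > 0 and δ ∈ (0,1), if N ≥ c · C² · (T(1 + log T) + log(2/δ)) / ε², then with probability at least 1 − δ over S ~ μ^{⊗N}, simultaneously for every θ ∈ U(4)^T one has R(θ) − R̂_S(θ) ≤ ε. -/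

import Mathlib

open MeasureTheory Matrix
open scoped Kronecker ComplexOrder

/-- The ℓ²→ℓ² operator norm (spectral norm) of a complex square matrix. -/
noncomputable def opNorm {n : Type*} [Fintype n] [DecidableEq n] (A : Matrix n n ℂ) : ℝ :=
  ‖Matrix.toEuclideanCLM (𝕜 := ℂ) A‖

/-- The variational unitary circuit: `circuit V U L = V L * (U (L-1) ⊗ I) * ⋯ * (U 0 ⊗ I) * V 0`,
i.e. `L` layers of 2-qubit gates interleaved with fixed global unitaries on `ℂ^{4m}`. -/
noncomputable def circuit {m : ℕ} (V : ℕ → Matrix (Fin 4 × Fin m) (Fin 4 × Fin m) ℂ)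
    (U : ℕ → Matrix (Fin 4) (Fin 4) ℂ) : ℕ → Matrix (Fin 4 × Fin m) (Fin 4 × Fin m) ℂ
  | 0 => V 0
  | (t + 1) => V (t + 1) * (U t ⊗ₖ (1 : Matrix (Fin m) (Fin m) ℂ)) * circuit V U t

/-- The loss `ℓ(θ; z) = Re Tr(O_z · F(θ) · ρ(z) · F(θ)*)`. -/
noncomputable def qloss {m : ℕ} {Z : Type*}
    (V : ℕ → Matrix (Fin 4 × Fin m) (Fin 4 × Fin m) ℂ) (L : ℕ)
    (O ρ : Z → Matrix (Fin 4 × Fin m) (Fin 4 × Fin m) ℂ)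
    (U : ℕ → Matrix (Fin 4) (Fin 4) ℂ) (z : Z) : ℝ :=
  ((O z * circuit V U L * ρ z * (circuit V U L)ᴴ).trace).re

section CircuitLoss

open scoped Matrix.Norms.L2Operator

variable {n : Type*} [Fintype n] [DecidableEq n]

lemma norm_le_one_of_mem_unitaryGroup {A : Matrix n n ℂ} (hA : A ∈ Matrix.unitaryGroup n ℂ) :
    ‖A‖ ≤ 1 := by
  cases subsingleton_or_nontrivial (Matrix n n ℂ)
  · simp [Subsingleton.elim A 0]
  · exact (CStarRing.norm_of_mem_unitary hA).le

lemma l2_opNorm_single_le (i j : n) (c : ℂ) : ‖Matrix.single i j c‖ ≤ ‖c‖ := by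
  have h : (Matrix.single i j c)ᴴ * Matrix.single i j c
      = Matrix.diagonal (Pi.single j (star c * c)) := by
    rw [Matrix.conjTranspose_single, Matrix.single_mul_single_same, Matrix.diagonal_single]
  have h2 := Matrix.l2_opNorm_conjTranspose_mul_self (Matrix.single i j c)
  rw [h, Matrix.l2_opNorm_diagonal, Pi.norm_single, norm_mul, norm_star] at h2
  nlinarith [norm_nonneg c, norm_nonneg (Matrix.single i j c)]

lemma l2_opNorm_le_sum_norm (A : Matrix n n ℂ) : ‖A‖ ≤ ∑ i, ∑ j, ‖A i j‖ := by
  conv_lhs => rw [Matrix.matrix_eq_sum_single A]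
  refine (norm_sum_le _ _).trans (Finset.sum_le_sum fun i _ => ?_)
  refine (norm_sum_le _ _).trans (Finset.sum_le_sum fun j _ => ?_)
  exact l2_opNorm_single_le i j _

/-- The amplification `A ↦ A ⊗ I` as a star-algebra homomorphism. -/
noncomputable def kroneckerOneHom (m n : Type*) [Fintype m] [DecidableEq m] [Fintype n]
    [DecidableEq n] : Matrix m m ℂ →⋆ₙₐ[ℂ] Matrix (m × n) (m × n) ℂ where
  toFun A := A ⊗ₖ (1 : Matrix n n ℂ)
  map_smul' c A := Matrix.smul_kronecker c A 1
  map_zero' := Matrix.zero_kronecker 1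
  map_add' A B := Matrix.add_kronecker A B 1
  map_mul' A B := by simp [← Matrix.mul_kronecker_mul]
  map_star' A := by simp [Matrix.star_eq_conjTranspose, Matrix.conjTranspose_kronecker]

lemma l2_opNorm_kronecker_one_le {m : Type*} [Fintype m] [DecidableEq m] (A : Matrix m m ℂ) :
    ‖A ⊗ₖ (1 : Matrix n n ℂ)‖ ≤ ‖A‖ :=
  NonUnitalStarAlgHom.norm_apply_le (kroneckerOneHom m n) A

lemma norm_trace_mul_le_of_posSemidef (A : Matrix n n ℂ) {ρ : Matrix n n ℂ}
    (hρ : ρ.PosSemidef) : ‖(A * ρ).trace‖ ≤ ‖A‖ * ρ.trace.re := by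
  obtain ⟨k, a, rfl⟩ := Matrix.posSemidef_iff_eq_sum_vecMulVec.mp hρ
  have key (v : n → ℂ) : ‖(A * vecMulVec v (star v)).trace‖
      ≤ ‖A‖ * (vecMulVec v (star v)).trace.re := by
    have h1 : (A * vecMulVec v (star v)).trace
        = inner ℂ (WithLp.toLp 2 v) (Matrix.toEuclideanCLM (𝕜 := ℂ) A (WithLp.toLp 2 v)) := by
      rw [Matrix.mul_vecMulVec, Matrix.trace_vecMulVec, Matrix.toEuclideanCLM_toLp,
        EuclideanSpace.inner_toLp_toLp]
    have h2 : (vecMulVec v (star v)).trace.re = ‖WithLp.toLp 2 v‖ ^ 2 := by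
      rw [Matrix.trace_vecMulVec, ← EuclideanSpace.inner_toLp_toLp]
      exact (norm_sq_eq_re_inner (𝕜 := ℂ) _).symm
    rw [h1, h2]
    refine (norm_inner_le_norm _ _).trans ?_
    have h3 := (Matrix.toEuclideanCLM (𝕜 := ℂ) A).le_opNorm (WithLp.toLp 2 v)
    rw [Matrix.l2_opNorm_toEuclideanCLM] at h3
    nlinarith [norm_nonneg (WithLp.toLp 2 v)]
  rw [Finset.mul_sum, Matrix.trace_sum, Matrix.trace_sum, Complex.re_sum, Finset.mul_sum]
  exact (norm_sum_le _ _).trans (Finset.sum_le_sum fun i _ => key (a i))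

variable {m : ℕ} {V : ℕ → Matrix (Fin 4 × Fin m) (Fin 4 × Fin m) ℂ}
  {U U' : ℕ → Matrix (Fin 4) (Fin 4) ℂ}

lemma norm_circuit_le_one {L : ℕ} (hV : ∀ s ≤ L, ‖V s‖ ≤ 1) (hU : ∀ t < L, ‖U t‖ ≤ 1) :
    ‖circuit V U L‖ ≤ 1 := by
  induction L with
  | zero => exact hV 0 le_rfl
  | succ t ih =>
    have h1 := ih (fun s hs => hV s (by lia)) (fun s hs => hU s (by lia))
    have h2 : ‖U t ⊗ₖ (1 : Matrix (Fin m) (Fin m) ℂ)‖ ≤ 1 :=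
      (l2_opNorm_kronecker_one_le _).trans (hU t (by lia))
    refine (norm_mul_le _ _).trans (mul_le_one₀ ?_ (norm_nonneg _) h1)
    exact (norm_mul_le _ _).trans (mul_le_one₀ (hV _ le_rfl) (norm_nonneg _) h2)

/-- Gate perturbations of a circuit add up. -/
lemma norm_circuit_sub_le {L : ℕ} (hV : ∀ s ≤ L, ‖V s‖ ≤ 1) (hU : ∀ t < L, ‖U t‖ ≤ 1)
    (hU' : ∀ t < L, ‖U' t‖ ≤ 1) :
    ‖circuit V U L - circuit V U' L‖ ≤ ∑ t ∈ Finset.range L, ‖U t - U' t‖ := by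
  induction L with
  | zero => simp [circuit]
  | succ t ih =>
    have hVt : ∀ s ≤ t, ‖V s‖ ≤ 1 := fun s hs => hV s (by lia)
    have h1 := ih hVt (fun s hs => hU s (by lia)) (fun s hs => hU' s (by lia))
    have hF := norm_circuit_le_one hVt (fun s hs => hU s (by lia))
    have hdiff := l2_opNorm_kronecker_one_le (n := Fin m) (U t - U' t)
    have hgate : ‖U' t ⊗ₖ (1 : Matrix (Fin m) (Fin m) ℂ)‖ ≤ 1 :=
      (l2_opNorm_kronecker_one_le _).trans (hU' t (by lia))
    have hsplit : circuit V U (t + 1) - circuit V U' (t + 1)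
        = V (t + 1) * (((U t - U' t) ⊗ₖ (1 : Matrix (Fin m) (Fin m) ℂ)) * circuit V U t
          + (U' t ⊗ₖ (1 : Matrix (Fin m) (Fin m) ℂ)) * (circuit V U t - circuit V U' t)) := by
      have : (U t - U' t) ⊗ₖ (1 : Matrix (Fin m) (Fin m) ℂ)
          = U t ⊗ₖ 1 - U' t ⊗ₖ 1 := map_sub (kroneckerOneHom (Fin 4) (Fin m)) _ _
      rw [this]
      simp only [circuit]
      noncomm_ring
    rw [hsplit, Finset.sum_range_succ]
    calc _ ≤ ‖V (t + 1)‖ * _ := norm_mul_le _ _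
      _ ≤ 1 * _ := mul_le_mul_of_nonneg_right (hV _ le_rfl) (norm_nonneg _)
      _ ≤ ‖(U t - U' t) ⊗ₖ (1 : Matrix (Fin m) (Fin m) ℂ)‖ * ‖circuit V U t‖
          + ‖U' t ⊗ₖ (1 : Matrix (Fin m) (Fin m) ℂ)‖ * ‖circuit V U t - circuit V U' t‖ := by
        rw [one_mul]
        exact (norm_add_le _ _).trans (add_le_add (norm_mul_le _ _) (norm_mul_le _ _))
      _ ≤ ‖U t - U' t‖ * 1 + 1 * ∑ t ∈ Finset.range t, ‖U t - U' t‖ := by gcongr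
      _ = _ := by ring

variable {Z : Type*} {O ρ : Z → Matrix (Fin 4 × Fin m) (Fin 4 × Fin m) ℂ} {C : ℝ} {L : ℕ}

lemma qloss_eq (z : Z) : qloss V L O ρ U z
    = (((circuit V U L)ᴴ * O z * circuit V U L * ρ z).trace).re := by
  rw [qloss, Matrix.trace_mul_comm]
  simp only [Matrix.mul_assoc]

lemma abs_qloss_le (hV : ∀ s ≤ L, ‖V s‖ ≤ 1) (hU : ∀ t < L, ‖U t‖ ≤ 1) {z : Z}
    (hρ : (ρ z).PosSemidef) (htr : (ρ z).trace = 1) (hO : ‖O z‖ ≤ C) :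
    |qloss V L O ρ U z| ≤ C := by
  have hF := norm_circuit_le_one hV hU
  have hC : 0 ≤ C := (norm_nonneg _).trans hO
  rw [qloss_eq]
  refine (Complex.abs_re_le_norm _).trans ((norm_trace_mul_le_of_posSemidef _ hρ).trans ?_)
  rw [htr, Complex.one_re, mul_one]
  calc _ ≤ ‖(circuit V U L)ᴴ‖ * ‖O z‖ * ‖circuit V U L‖ := norm_mul₃_le
    _ ≤ 1 * C * 1 := by rw [Matrix.l2_opNorm_conjTranspose]; gcongr
    _ = C := by ring

/-- The loss is Lipschitz in the gates, uniformly over the data. -/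
lemma abs_qloss_sub_le (hV : ∀ s ≤ L, ‖V s‖ ≤ 1) (hU : ∀ t < L, ‖U t‖ ≤ 1)
    (hU' : ∀ t < L, ‖U' t‖ ≤ 1) {z : Z}
    (hρ : (ρ z).PosSemidef) (htr : (ρ z).trace = 1) (hO : ‖O z‖ ≤ C) :
    |qloss V L O ρ U z - qloss V L O ρ U' z|
      ≤ 2 * C * ∑ t ∈ Finset.range L, ‖U t - U' t‖ := by
  have hF := norm_circuit_le_one hV hU
  have hF' := norm_circuit_le_one hV hU'
  have hd := norm_circuit_sub_le hV hU hU'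
  have hC : 0 ≤ C := (norm_nonneg _).trans hO
  set F := circuit V U L with hFdef
  set G := circuit V U' L with hGdef
  set s := ∑ t ∈ Finset.range L, ‖U t - U' t‖
  have hsplit : Fᴴ * O z * F * ρ z - Gᴴ * O z * G * ρ z
      = ((F - G)ᴴ * O z * F + Gᴴ * O z * (F - G)) * ρ z := by
    rw [Matrix.conjTranspose_sub]
    noncomm_ring
  rw [qloss_eq, qloss_eq, ← Complex.sub_re, ← Matrix.trace_sub, ← hFdef, ← hGdef, hsplit]
  refine (Complex.abs_re_le_norm _).trans ((norm_trace_mul_le_of_posSemidef _ hρ).trans ?_)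
  rw [htr, Complex.one_re, mul_one]
  calc _ ≤ ‖(F - G)ᴴ‖ * ‖O z‖ * ‖F‖ + ‖Gᴴ‖ * ‖O z‖ * ‖F - G‖ :=
        (norm_add_le _ _).trans (add_le_add norm_mul₃_le norm_mul₃_le)
    _ ≤ s * C * 1 + 1 * C * s := by
        rw [Matrix.l2_opNorm_conjTranspose, Matrix.l2_opNorm_conjTranspose]; gcongr
    _ = 2 * C * s := by ring

lemma measurable_qloss [MeasurableSpace Z] (hρ : ∀ p q, Measurable fun z => ρ z p q)
    (hO : ∀ p q, Measurable fun z => O z p q) : Measurable (qloss V L O ρ U) := by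
  unfold qloss
  simp only [Matrix.trace, Matrix.diag, Matrix.mul_apply]
  fun_prop

end CircuitLoss

section Chaining

variable {Z : Type*} [MeasurableSpace Z] {μ : Measure Z}

/-- Difference between the mean of `f` and its empirical mean over the sample `S`. -/
noncomputable def generalizationGap (μ : Measure Z) {N : ℕ} (f : Z → ℝ) (S : Fin N → Z) : ℝ :=
  (∫ z, f z ∂μ) - (1 / N) * ∑ i, f (S i)

lemma integrable_of_abs_le [IsFiniteMeasure μ] {f : Z → ℝ} (hf : Measurable f) {D : ℝ} (hD : ∀ z, |f z| ≤ D) :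
    Integrable f μ :=
  Integrable.of_bound hf.aestronglyMeasurable D (Filter.Eventually.of_forall hD)

lemma generalizationGap_sub {f g : Z → ℝ} (hf : Integrable f μ) (hg : Integrable g μ) {N : ℕ}
    (S : Fin N → Z) :
    generalizationGap μ (fun z => f z - g z) S
      = generalizationGap μ f S - generalizationGap μ g S := by
  rw [generalizationGap, generalizationGap, generalizationGap, integral_sub hf hg,
    Finset.sum_sub_distrib]
  ring

variable [IsProbabilityMeasure μ]

lemma generalizationGap_le {f : Z → ℝ} {D : ℝ} (hD : ∀ z, |f z| ≤ D) {N : ℕ} (hN : 0 < N)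
    (S : Fin N → Z) : generalizationGap μ f S ≤ 2 * D := by
  have h1 : ∫ z, f z ∂μ ≤ D := by
    have := norm_integral_le_of_norm_le_const (μ := μ) (f := f) (C := D)
      (Filter.Eventually.of_forall hD)
    simp only [probReal_univ, mul_one] at this
    exact (le_abs_self _).trans this
  have h2 : -(N * D) ≤ ∑ i, f (S i) := by
    have : ∑ _i : Fin N, (-D) ≤ ∑ i, f (S i) :=
      Finset.sum_le_sum fun i _ => (abs_le.mp (hD (S i))).1
    simpa using this
  have hN' : (0 : ℝ) < N := by exact_mod_cast hN
  have h3 : -D ≤ (1 / N) * ∑ i, f (S i) := by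
    rw [one_div, ← div_eq_inv_mul, le_div_iff₀ hN']
    linarith
  unfold generalizationGap
  linarith

/-- **Hoeffding's inequality** for the generalization gap of a bounded function. -/
lemma measure_le_generalizationGap_le {f : Z → ℝ} (hf : Measurable f) {D : ℝ} (hD0 : 0 ≤ D)
    (hD : ∀ z, |f z| ≤ D) {N : ℕ} (hN : 0 < N) {s : ℝ} (hs : 0 ≤ s) :
    (Measure.pi fun _ : Fin N => μ) {S | s ≤ generalizationGap μ f S}
      ≤ ENNReal.ofReal (Real.exp (-(N * s ^ 2 / (2 * D ^ 2)))) := by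
  have hN' : (0 : ℝ) < N := by exact_mod_cast hN
  set P := Measure.pi fun _ : Fin N => μ
  have hsub : ProbabilityTheory.HasSubgaussianMGF (fun z => -f z - ∫ z, -f z ∂μ)
      ((‖D - (-D)‖₊ / 2) ^ 2) μ :=
    ProbabilityTheory.hasSubgaussianMGF_of_mem_Icc hf.neg.aemeasurable
      (Filter.Eventually.of_forall fun z => by
        have := abs_le.mp (hD z)
        constructor <;> linarith)
  have hm : Measurable fun z => -f z - ∫ z, -f z ∂μ := hf.neg.sub_const _
  have hind : ProbabilityTheory.iIndepFun
      (fun (i : Fin N) (S : Fin N → Z) => -f (S i) - ∫ z, -f z ∂μ) P :=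
    ProbabilityTheory.iIndepFun_pi (μ := fun _ : Fin N => μ)
      (X := fun _ z => -f z - ∫ z, -f z ∂μ) fun _ => hm.aemeasurable
  have hsubi (i : Fin N) : ProbabilityTheory.HasSubgaussianMGF
      (fun S : Fin N → Z => -f (S i) - ∫ z, -f z ∂μ) ((‖D - (-D)‖₊ / 2) ^ 2) P := by
    have hmp := measurePreserving_eval (fun _ : Fin N => μ) i
    refine ProbabilityTheory.HasSubgaussianMGF.of_map (Y := fun S : Fin N → Z => S i)
      (X := fun z => -f z - ∫ z, -f z ∂μ) hmp.measurable.aemeasurable ?_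
    rw [hmp.map_eq]
    exact hsub
  have hoeff := ProbabilityTheory.HasSubgaussianMGF.measure_sum_ge_le_of_iIndepFun hind
    (s := Finset.univ) (fun i _ => hsubi i) (ε := N * s) (by positivity)
  have hset : {S : Fin N → Z | s ≤ generalizationGap μ f S}
      = {S | N * s ≤ ∑ i, (-f (S i) - ∫ z, -f z ∂μ)} := by
    ext S
    have : ∑ i, (-f (S i) - ∫ z, -f z ∂μ) = N * generalizationGap μ f S := by
      simp only [integral_neg, Finset.sum_sub_distrib, Finset.sum_neg_distrib, generalizationGap,
        Finset.sum_const, Finset.card_univ, Fintype.card_fin, nsmul_eq_mul]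
      field_simp
      ring
    simp only [Set.mem_ofPred_eq, this]
    exact (mul_le_mul_iff_right₀ hN').symm
  rw [hset, ← ofReal_measureReal]
  refine ENNReal.ofReal_le_ofReal (hoeff.trans_eq ?_)
  have hnn : ((‖D - (-D)‖₊ / 2 : NNReal) : ℝ) = D := by
    simp only [NNReal.coe_div, coe_nnnorm, NNReal.coe_ofNat, Real.norm_eq_abs]
    rw [abs_of_nonneg (by linarith)]
    ring
  congr 1
  simp only [Finset.sum_const, Finset.card_univ, Fintype.card_fin, nsmul_eq_mul, NNReal.coe_mul,
    NNReal.coe_natCast, NNReal.coe_pow, hnn]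
  rcases hD0.eq_or_lt with h | h
  · simp [← h]
  · field_simp

/-- **Chaining bound.** A class of functions bounded by `C` that admits, at every dyadic scale
`C / 2 ^ k`, a uniform net of log-cardinality at most `A * (k + 1)`, generalizes uniformly from
order `C ^ 2 * (A + log (2 / δ)) / ε ^ 2` samples. -/
theorem measure_forall_generalizationGap_le_of_nets {F : Set (Z → ℝ)} {C A : ℝ} (hC : 0 < C)
    (hA : 0 ≤ A) (hF : ∀ f ∈ F, Measurable f) (net : ℕ → Finset (Z → ℝ)) (hnet0 : net 0 = {0})
    (hcard : ∀ k : ℕ, ((net k).card : ℝ) ≤ Real.exp (A * (k + 1)))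
    (hmeas : ∀ k, ∀ g ∈ net k, Measurable g)
    (happrox : ∀ f ∈ F, ∀ k, ∃ g ∈ net k, ∀ z, |f z - g z| ≤ C / 2 ^ k)
    {N : ℕ} (hN : 0 < N) {ε δ : ℝ} (hε : 0 < ε) (hδ : 0 < δ) (hδ1 : δ < 1)
    (hNle : 128 * C ^ 2 * (3 * A + Real.log (2 / δ)) / ε ^ 2 ≤ N) :
    ENNReal.ofReal (1 - δ) ≤ (Measure.pi fun _ : Fin N => μ)
      {S | ∀ f ∈ F, generalizationGap μ f S ≤ ε} := by
  classical
  set P := Measure.pi fun _ : Fin N => μ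
  let step (k : ℕ) : ℝ := ε / 4 * (3 / 4) ^ k
  let links (k : ℕ) : Finset ((Z → ℝ) × (Z → ℝ)) :=
    (net k ×ˢ net (k + 1)).filter fun p => ∀ z, |p.2 z - p.1 z| ≤ 2 * C / 2 ^ k
  let bad (k : ℕ) : Set (Fin N → Z) :=
    ⋃ p ∈ links k, {S | step k ≤ generalizationGap μ (fun z => p.2 z - p.1 z) S}
  have hbad (k : ℕ) : P (bad k) ≤ ENNReal.ofReal ((δ / 2) ^ (k + 1)) := by
    set B := Real.exp (-(N * step k ^ 2 / (2 * (2 * C / 2 ^ k) ^ 2)))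
    have hlink : ∀ p ∈ links k,
        P {S | step k ≤ generalizationGap μ (fun z => p.2 z - p.1 z) S} ≤ ENNReal.ofReal B := by
      intro p hp
      simp only [links, Finset.mem_filter, Finset.mem_product] at hp
      exact measure_le_generalizationGap_le ((hmeas _ _ hp.1.2).sub (hmeas _ _ hp.1.1))
        (by positivity) hp.2 hN (by positivity)
    have hcount : ((links k).card : ℝ) ≤ Real.exp (3 * A * (k + 1)) := by
      have h1 : (links k).card ≤ (net k).card * (net (k + 1)).card :=
        (Finset.card_filter_le _ _).trans_eq (Finset.card_product _ _)
      calc ((links k).card : ℝ) ≤ (net k).card * (net (k + 1)).card := by exact_mod_cast h1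
        _ ≤ Real.exp (A * (k + 1)) * Real.exp (A * ((k + 1 : ℕ) + 1)) := by
          gcongr
          exacts [hcard k, hcard (k + 1)]
        _ = Real.exp (A * (k + 1) + A * ((k + 1 : ℕ) + 1)) := (Real.exp_add _ _).symm
        _ ≤ _ := by
          gcongr
          push_cast
          nlinarith [mul_nonneg hA (Nat.cast_nonneg (α := ℝ) k)]
    have hexp : (3 * A + Real.log (2 / δ)) * (k + 1)
        ≤ N * step k ^ 2 / (2 * (2 * C / 2 ^ k) ^ 2) := by
      have hb : 1 + (k : ℝ) ≤ (9 / 4) ^ k := by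
        have := one_add_mul_le_pow (a := (5 / 4 : ℝ)) (by norm_num) k
        norm_num at this
        have hk := Nat.cast_nonneg (α := ℝ) k
        linarith
      have heq : N * step k ^ 2 / (2 * (2 * C / 2 ^ k) ^ 2)
          = (N * ε ^ 2 / (128 * C ^ 2)) * (9 / 4) ^ k := by
        have h9 : ((9 : ℝ) / 4) ^ k = ((3 / 4) ^ k) ^ 2 * (2 ^ k) ^ 2 := by
          rw [← pow_mul, ← pow_mul, mul_comm k 2, pow_mul, pow_mul, ← mul_pow]
          norm_num
        rw [h9]
        simp only [step]
        field_simp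
        ring
      have hN2 : 3 * A + Real.log (2 / δ) ≤ N * ε ^ 2 / (128 * C ^ 2) := by
        rw [div_le_iff₀ (by positivity)] at hNle
        rw [le_div_iff₀ (by positivity)]
        linarith
      rw [heq]
      have hk := Nat.cast_nonneg (α := ℝ) k
      calc _ ≤ (N * ε ^ 2 / (128 * C ^ 2)) * ((k : ℝ) + 1) := by gcongr
        _ ≤ _ := by gcongr; linarith
    calc P (bad k) ≤ ∑ p ∈ links k, _ := measure_biUnion_finset_le _ _
      _ ≤ ∑ p ∈ links k, ENNReal.ofReal B := Finset.sum_le_sum hlink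
      _ = ENNReal.ofReal ((links k).card * B) := by
        rw [Finset.sum_const, nsmul_eq_mul, ENNReal.ofReal_mul (by positivity),
          ENNReal.ofReal_natCast]
      _ ≤ ENNReal.ofReal ((δ / 2) ^ (k + 1)) := by
        apply ENNReal.ofReal_le_ofReal
        calc _ ≤ Real.exp (3 * A * (k + 1))
              * Real.exp (-((3 * A + Real.log (2 / δ)) * (k + 1))) := by
              gcongr
              simp only [B]
              gcongr
          _ = Real.exp ((k + 1 : ℕ) * Real.log (δ / 2)) := by
              rw [← Real.exp_add, ← inv_div 2 δ, Real.log_inv]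
              congr 1
              push_cast
              ring
          _ = (δ / 2) ^ (k + 1) := by
              rw [Real.exp_nat_mul, Real.exp_log (by positivity)]
  have hbadUnion : P (⋃ k, bad k) ≤ ENNReal.ofReal δ := by
    have hsum : HasSum (fun k : ℕ => (δ / 2) ^ (k + 1)) ((δ / 2) * (1 - δ / 2)⁻¹) := by
      simpa only [pow_succ'] using
        (hasSum_geometric_of_lt_one (by positivity) (by linarith)).mul_left (δ / 2)
    calc _ ≤ ∑' k, P (bad k) := measure_iUnion_le _
      _ ≤ ∑' k, ENNReal.ofReal ((δ / 2) ^ (k + 1)) := ENNReal.tsum_le_tsum hbad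
      _ = ENNReal.ofReal ((δ / 2) * (1 - δ / 2)⁻¹) := by
        rw [← ENNReal.ofReal_tsum_of_nonneg (fun k => by positivity) hsum.summable, hsum.tsum_eq]
      _ ≤ ENNReal.ofReal δ := by
        apply ENNReal.ofReal_le_ofReal
        rw [← div_eq_mul_inv, div_le_iff₀ (by linarith)]
        nlinarith
  have hgood : (⋃ k, bad k)ᶜ ⊆ {S | ∀ f ∈ F, generalizationGap μ f S ≤ ε} := by
    intro S hS f hf
    choose g hg hfg using happrox f hf
    have hfC (z : Z) : |f z| ≤ C := by
      have h0 : g 0 = 0 := by simpa [hnet0] using hg 0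
      simpa [h0] using hfg 0 z
    have hfi : Integrable f μ := integrable_of_abs_le (hF f hf) hfC
    have hgi (k : ℕ) : Integrable (g k) μ := by
      have h1 : Integrable (fun z => f z - g k z) μ :=
        integrable_of_abs_le ((hF f hf).sub (hmeas k _ (hg k))) (hfg k)
      exact (hfi.sub h1).congr (Filter.Eventually.of_forall fun z => by simp)
    have hstep (k : ℕ) :
        generalizationGap μ (g (k + 1)) S - generalizationGap μ (g k) S ≤ step k := by
      rw [← generalizationGap_sub (hgi _) (hgi _)]
      by_contra! hlt
      refine hS (Set.mem_iUnion.2 ⟨k, Set.mem_iUnion₂.2 ⟨(g k, g (k + 1)), ?_, hlt.le⟩⟩)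
      simp only [links, Finset.mem_filter, Finset.mem_product]
      refine ⟨⟨hg k, hg (k + 1)⟩, fun z => ?_⟩
      have h1 := abs_le.mp (hfg k z)
      have h2 := abs_le.mp (hfg (k + 1) z)
      have h3 : C / 2 ^ (k + 1) ≤ C / 2 ^ k := by
        gcongr
        exacts [by norm_num, by lia]
      have h4 : 2 * C / 2 ^ k = C / 2 ^ k + C / 2 ^ k := by ring
      rw [h4, abs_le]
      constructor <;> linarith
    have hchain (k : ℕ) : generalizationGap μ (g k) S ≤ ε * (1 - (3 / 4) ^ k) := by
      induction k with
      | zero =>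
        have h0 : g 0 = 0 := by simpa [hnet0] using hg 0
        simp [h0, generalizationGap]
      | succ k ih =>
        have := hstep k
        simp only [step] at this
        rw [pow_succ]
        linarith
    have hlim (k : ℕ) : generalizationGap μ f S ≤ ε + 2 * C * (1 / 2) ^ k := by
      have h1 := generalizationGap_le (μ := μ) (hfg k) hN S
      rw [generalizationGap_sub hfi (hgi k)] at h1
      have h2 := hchain k
      have h3 : 0 ≤ ε * (3 / 4) ^ k := by positivity
      have h4 : 2 * (C / 2 ^ k) = 2 * C * (1 / 2) ^ k := by rw [one_div, inv_pow]; ring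
      linarith
    have hto : Filter.Tendsto (fun k : ℕ => ε + 2 * C * (1 / 2 : ℝ) ^ k) Filter.atTop
        (nhds (ε + 2 * C * 0)) :=
      ((tendsto_pow_atTop_nhds_zero_of_lt_one (by norm_num) (by norm_num)).const_mul _).const_add _
    simpa using ge_of_tendsto' hto hlim
  have hcover : (1 : ENNReal) ≤ P ((⋃ k, bad k)ᶜ) + P (⋃ k, bad k) := by
    rw [← measure_univ (μ := P), ← Set.compl_union_self (⋃ k, bad k)]
    exact measure_union_le _ _
  calc ENNReal.ofReal (1 - δ) = 1 - ENNReal.ofReal δ := by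
        rw [ENNReal.ofReal_sub _ hδ.le, ENNReal.ofReal_one]
    _ ≤ P ((⋃ k, bad k)ᶜ) := by
        rw [tsub_le_iff_right]
        exact hcover.trans (by gcongr)
    _ ≤ _ := measure_mono hgood

end Chaining

section Quantization

open scoped Matrix.Norms.L2Operator

/-- The cell of `x ∈ [-1, 1]` in the subdivision of mesh `1 / n`. -/
noncomputable def gridCell (n : ℕ) (x : ℝ) : Fin (2 * n + 1) :=
  Fin.ofNat (2 * n + 1) ⌊(x + 1) * n⌋₊

lemma abs_sub_le_of_gridCell_eq {n : ℕ} (hn : 0 < n) {x y : ℝ} (hx : |x| ≤ 1) (hy : |y| ≤ 1)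
    (h : gridCell n x = gridCell n y) : |x - y| ≤ 1 / n := by
  have hn' : (0 : ℝ) < n := by exact_mod_cast hn
  have hlt {w : ℝ} (hw : |w| ≤ 1) : ⌊(w + 1) * n⌋₊ < 2 * n + 1 := by
    refine Nat.lt_succ_of_le (Nat.floor_le_of_le ?_)
    push_cast
    have := (abs_le.mp hw).2
    gcongr
    linarith
  have hfloor : ⌊(x + 1) * n⌋₊ = ⌊(y + 1) * n⌋₊ := by
    have := congrArg Fin.val h
    simpa [gridCell, Fin.ofNat, Nat.mod_eq_of_lt (hlt hx), Nat.mod_eq_of_lt (hlt hy)] using this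
  have hx0 : 0 ≤ (x + 1) * n := mul_nonneg (by linarith [(abs_le.mp hx).1]) hn'.le
  have hy0 : 0 ≤ (y + 1) * n := mul_nonneg (by linarith [(abs_le.mp hy).1]) hn'.le
  have h1 := Nat.floor_le hx0
  have h2 := Nat.lt_floor_add_one ((x + 1) * n)
  have h3 := Nat.floor_le hy0
  have h4 := Nat.lt_floor_add_one ((y + 1) * n)
  rw [hfloor] at h1 h2
  rw [le_div_iff₀ hn']
  nth_rewrite 1 [← abs_of_pos hn']
  rw [← abs_mul, abs_le]
  constructor <;> linarith

/-- Grid cells of the real and imaginary parts of all entries of the first `T` gates. -/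
noncomputable def gateCells (T n : ℕ) (U : ℕ → Matrix (Fin 4) (Fin 4) ℂ) :
    Fin T → Fin 4 → Fin 4 → Fin (2 * n + 1) × Fin (2 * n + 1) :=
  fun t i j => (gridCell n (U t i j).re, gridCell n (U t i j).im)

lemma norm_gate_sub_le_of_gateCells_eq {T n : ℕ} (hn : 0 < n)
    {U U' : ℕ → Matrix (Fin 4) (Fin 4) ℂ}
    (hU : ∀ t < T, U t ∈ Matrix.unitaryGroup (Fin 4) ℂ)
    (hU' : ∀ t < T, U' t ∈ Matrix.unitaryGroup (Fin 4) ℂ)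
    (h : gateCells T n U = gateCells T n U') {t : ℕ} (ht : t < T) :
    ‖U t - U' t‖ ≤ 32 / n := by
  have hentry (i j : Fin 4) : ‖(U t - U' t) i j‖ ≤ 2 / n := by
    have hc := congrFun (congrFun (congrFun h ⟨t, ht⟩) i) j
    simp only [gateCells, Prod.mk.injEq] at hc
    have hb := entry_norm_bound_of_unitary (hU t ht) i j
    have hb' := entry_norm_bound_of_unitary (hU' t ht) i j
    have hre := abs_sub_le_of_gridCell_eq hn ((Complex.abs_re_le_norm _).trans hb)
      ((Complex.abs_re_le_norm _).trans hb') hc.1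
    have him := abs_sub_le_of_gridCell_eq hn ((Complex.abs_im_le_norm _).trans hb)
      ((Complex.abs_im_le_norm _).trans hb') hc.2
    refine (Complex.norm_le_abs_re_add_abs_im _).trans ?_
    rw [Matrix.sub_apply, Complex.sub_re, Complex.sub_im]
    linarith [add_div (1 : ℝ) 1 n, one_add_one_eq_two (R := ℝ)]
  calc ‖U t - U' t‖ ≤ ∑ i, ∑ j, ‖(U t - U' t) i j‖ := l2_opNorm_le_sum_norm _
    _ ≤ ∑ _i : Fin 4, ∑ _j : Fin 4, (2 / n : ℝ) :=
      Finset.sum_le_sum fun i _ => Finset.sum_le_sum fun j _ => hentry i j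
    _ = 32 / n := by
      simp only [Finset.sum_const, Finset.card_univ, Fintype.card_fin, nsmul_eq_mul]
      ring

/-- A finite-valued label `q` on `P` gives a net of `f '' P` with one point for each label. -/
lemma exists_finset_net_of_label {Θ Q Y : Type*} [Fintype Q] (q : Θ → Q) (f : Θ → Y)
    (P : Set Θ) : ∃ net : Finset Y, net.card ≤ Fintype.card Q ∧ (∀ y ∈ net, ∃ θ ∈ P, f θ = y) ∧
      ∀ θ ∈ P, ∃ θ' ∈ P, q θ = q θ' ∧ f θ' ∈ net := by
  classical
  rcases isEmpty_or_nonempty Θ with h | h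
  · exact ⟨∅, by simp, by simp, fun θ => h.elim θ⟩
  refine ⟨(Finset.univ.filter (· ∈ q '' P)).image fun c => f (Function.invFunOn q P c),
    Finset.card_image_le.trans (Finset.card_filter_le _ _), ?_, ?_⟩
  · intro y hy
    simp only [Finset.mem_image, Finset.mem_filter, Finset.mem_univ, true_and] at hy
    obtain ⟨c, hc, rfl⟩ := hy
    exact ⟨_, Function.invFunOn_mem hc, rfl⟩
  · intro θ hθ
    have hc : q θ ∈ q '' P := Set.mem_image_of_mem q hθ
    refine ⟨_, Function.invFunOn_mem hc, (Function.invFunOn_eq hc).symm, ?_⟩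
    exact Finset.mem_image.2 ⟨q θ, Finset.mem_filter.2 ⟨Finset.mem_univ _, hc⟩, rfl⟩

lemma card_gateCells_le {T : ℕ} (hT : 0 < T) (k : ℕ) :
    (Fintype.card (Fin T → Fin 4 → Fin 4 →
      Fin (2 * (64 * T * 2 ^ k) + 1) × Fin (2 * (64 * T * 2 ^ k) + 1)) : ℝ)
      ≤ Real.exp (160 * (T * (1 + Real.log T)) * (k + 1)) := by
  have hT1 : (1 : ℝ) ≤ T := by exact_mod_cast hT
  have hlog : 0 ≤ Real.log T := Real.log_nonneg hT1
  have h2k : (1 : ℝ) ≤ 2 ^ k := one_le_pow₀ (by norm_num)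
  have h129 : (129 : ℝ) ≤ Real.exp 5 := by
    have h := Real.exp_one_gt_d9.le
    calc (129 : ℝ) ≤ 2.7182818283 ^ 5 := by norm_num
      _ ≤ Real.exp 1 ^ 5 := by gcongr
      _ = Real.exp 5 := by rw [← Real.exp_nat_mul]; norm_num
  have h2 : (2 : ℝ) ^ k ≤ Real.exp k := by
    rw [← mul_one (k : ℝ), Real.exp_nat_mul]
    have := Real.add_one_le_exp (1 : ℝ)
    gcongr
    linarith
  have hbase : (2 * (64 * T * 2 ^ k) + 1 : ℝ)
      ≤ Real.exp (5 * (1 + Real.log T) * (k + 1)) := by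
    calc (2 * (64 * T * 2 ^ k) + 1 : ℝ) ≤ 129 * T * 2 ^ k := by nlinarith
      _ ≤ Real.exp 5 * Real.exp (Real.log T) * Real.exp k := by
        rw [Real.exp_log (by linarith)]
        gcongr
      _ = Real.exp (5 + Real.log T + k) := by rw [Real.exp_add, Real.exp_add]
      _ ≤ _ := by
        gcongr
        have hk := Nat.cast_nonneg (α := ℝ) k
        nlinarith [mul_nonneg hlog hk]
  have hcard : Fintype.card (Fin T → Fin 4 → Fin 4 →
      Fin (2 * (64 * T * 2 ^ k) + 1) × Fin (2 * (64 * T * 2 ^ k) + 1))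
      = (2 * (64 * T * 2 ^ k) + 1) ^ (32 * T) := by
    simp only [Fintype.card_fun, Fintype.card_prod, Fintype.card_fin]
    rw [← pow_two, ← pow_mul, ← pow_mul, ← pow_mul]
    congr 1
    ring
  rw [hcard]
  push_cast
  calc _ ≤ Real.exp (5 * (1 + Real.log T) * (k + 1)) ^ (32 * T) := by gcongr
    _ = _ := by
      rw [← Real.exp_nat_mul]
      congr 1
      push_cast
      ring

end Quantization

/-- Sample complexity for generalization: if `N ≥ c·C²·(T(1+log T) + log(2/δ))/ε²`, then with
probability at least `1 − δ`, simultaneously for all parameter settings the generalization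
error is at most `ε`. -/
theorem qmlm_sample_complexity :
    ∃ c : ℝ, 0 < c ∧
      ∀ (m T N : ℕ), 0 < m → 0 < T → 0 < N →
      ∀ V : ℕ → Matrix (Fin 4 × Fin m) (Fin 4 × Fin m) ℂ,
        (∀ s ≤ T, V s ∈ Matrix.unitaryGroup (Fin 4 × Fin m) ℂ) →
      ∀ (Z : Type) (_ : MeasurableSpace Z) (μ : Measure Z), IsProbabilityMeasure μ →
      ∀ ρ : Z → Matrix (Fin 4 × Fin m) (Fin 4 × Fin m) ℂ,
        (∀ p q, Measurable fun z => ρ z p q) →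
        (∀ z, (ρ z).PosSemidef ∧ (ρ z).trace = 1) →
      ∀ C : ℝ, 0 < C →
      ∀ O : Z → Matrix (Fin 4 × Fin m) (Fin 4 × Fin m) ℂ,
        (∀ p q, Measurable fun z => O z p q) →
        (∀ z, (O z).IsHermitian ∧ opNorm (O z) ≤ C) →
      ∀ ε : ℝ, 0 < ε → ∀ δ : ℝ, 0 < δ → δ < 1 →
        c * C ^ 2 * (T * (1 + Real.log T) + Real.log (2 / δ)) / ε ^ 2 ≤ N →
        ENNReal.ofReal (1 - δ) ≤
          (Measure.pi fun _ : Fin N => μ) {S | ∀ U : ℕ → Matrix (Fin 4) (Fin 4) ℂ,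
            (∀ t < T, U t ∈ Matrix.unitaryGroup (Fin 4) ℂ) →
            (∫ z, qloss V T O ρ U z ∂μ) - (1 / N) * ∑ i, qloss V T O ρ U (S i) ≤ ε} := by
  refine ⟨128 * 480, by norm_num, ?_⟩
  intro m T N _ hT hN V hV Z _ μ _ ρ hρm hρ C hC O hOm hO ε hε δ hδ hδ1 hNle
  have hT1 : (1 : ℝ) ≤ T := by exact_mod_cast hT
  have hcomplexity : 0 ≤ T * (1 + Real.log T) := by
    have := Real.log_nonneg hT1
    positivity
  let P : Set (ℕ → Matrix (Fin 4) (Fin 4) ℂ) :=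
    {U | ∀ t < T, U t ∈ Matrix.unitaryGroup (Fin 4) ℂ}
  let loss := qloss V T O ρ
  choose net hcard hmem hnet using fun k : ℕ =>
    exists_finset_net_of_label (gateCells T (64 * T * 2 ^ k)) loss P
  have hV1 := fun s hs => norm_le_one_of_mem_unitaryGroup (hV s hs)
  have hU1 {U} (hU : U ∈ P) := fun t ht => norm_le_one_of_mem_unitaryGroup (hU t ht)
  have happrox (U) (hU : U ∈ P) (k : ℕ) : ∃ g ∈ net k, ∀ z, |loss U z - g z| ≤ C / 2 ^ k := by
    obtain ⟨U', hU', hcell, hg⟩ := hnet k U hU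
    refine ⟨_, hg, fun z => ?_⟩
    refine (abs_qloss_sub_le hV1 (hU1 hU) (hU1 hU') (hρ z).1 (hρ z).2 (hO z).2).trans ?_
    have hsum := Finset.sum_le_sum fun t ht => norm_gate_sub_le_of_gateCells_eq
      (by positivity) hU hU' hcell (Finset.mem_range.1 ht)
    refine (mul_le_mul_of_nonneg_left hsum (by positivity)).trans_eq ?_
    rw [Finset.sum_const, Finset.card_range, nsmul_eq_mul]
    push_cast
    field_simp
    norm_num
  have hmeas (U) : Measurable (loss U) := measurable_qloss hρm hOm
  have main := measure_forall_generalizationGap_le_of_nets (μ := μ) (F := loss '' P)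
    (A := 160 * (T * (1 + Real.log T))) hC (by positivity)
    (by rintro _ ⟨U, -, rfl⟩; exact hmeas U)
    (fun k => if k = 0 then {0} else net k) (if_pos rfl)
    (by
      intro k
      split_ifs with hk
      · rw [Finset.card_singleton, Nat.cast_one]
        exact Real.one_le_exp (by positivity)
      · exact (Nat.cast_le.2 (hcard k)).trans (card_gateCells_le hT k))
    (by
      intro k g hg
      split_ifs at hg with hk
      · rw [Finset.mem_singleton.1 hg]
        exact measurable_zero
      · obtain ⟨U, -, rfl⟩ := hmem k g hg
        exact hmeas U)
    (by
      rintro _ ⟨U, hU, rfl⟩ k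
      split_ifs with hk
      · refine ⟨0, Finset.mem_singleton_self 0, fun z => ?_⟩
        simpa [hk] using abs_qloss_le hV1 (hU1 hU) (hρ z).1 (hρ z).2 (hO z).2
      · exact happrox U hU k)
    hN hε hδ hδ1
    (by
      refine le_trans ?_ hNle
      have hlog : 0 ≤ Real.log (2 / δ) :=
        Real.log_nonneg (by rw [le_div_iff₀ hδ]; linarith)
      rw [mul_right_comm 128 480 (C ^ 2), mul_assoc _ 480]
      gcongr
      linarith)
  refine main.trans (measure_mono fun S hS U hU => ?_)
  exact hS _ (Set.mem_image_of_mem loss hU)
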